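/- arXiv:2109.10881 — 2 statements merged into one kernel-verified Lean document; each statement's English description precedes it below -/
import Mathlib

section
/- Let Ω ⊂ ℍ be a bounded domain, θ ∈ [0,2π), u ∈ ℍ. For every z ∈ Ω there exists ${}^θ_uB_z ∈ {}^θ_u𝒜(Ω)$ such that $f(z) = ∫_Ω \overline{{}^θ_uB_z(ζ)}\,f(ζ)\,dμ_ζ$ for every f ∈ ${}^θ_u𝒜(Ω)$ (quaternionic conjugation, Bochner integral); i.e., the space ${}^θ_u𝒜(Ω)$ possesses a reproducing Bergman kernel ${}^θ_u𝓑_Ω(z,ζ) = \overline{{}^θ_uB_z(ζ)}$. -/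
open MeasureTheory

noncomputable section

/-- The real quaternions `ℍ`. -/
abbrev H4 : Type := Quaternion ℝ

instance : MeasurableSpace H4 := borel _
instance : BorelSpace H4 := ⟨rfl⟩

/-- The quaternion unit `i`. -/
def qI : H4 := ⟨0, 1, 0, 0⟩
/-- The quaternion unit `j`. -/
def qJ : H4 := ⟨0, 0, 1, 0⟩
/-- `e^{iθ} = cos θ + (sin θ) i` as a quaternion. -/
def eIθ (θ : ℝ) : H4 := ⟨Real.cos θ, Real.sin θ, 0, 0⟩
/-- The basis direction `i e^{iθ} j`. -/
def e2 (θ : ℝ) : H4 := qI * eIθ θ * qJ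
/-- The basis direction `e^{iθ} j`. -/
def e3 (θ : ℝ) : H4 := eIθ θ * qJ

/-- Third θ-coordinate of a quaternion `z = x₀ + x₁ i + x₂ (i e^{iθ} j) + x₃ (e^{iθ} j)`. -/
def x2θ (θ : ℝ) (z : H4) : ℝ := -z.imJ * Real.sin θ + z.imK * Real.cos θ
/-- Fourth θ-coordinate of a quaternion. -/
def x3θ (θ : ℝ) (z : H4) : ℝ := z.imJ * Real.cos θ + z.imK * Real.sin θ

/-- The θ-inner product `⟨u,z⟩_θ`: the dot product of θ-coordinates. -/
def innerθ (θ : ℝ) (u z : H4) : ℝ :=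
  u.re * z.re + u.imI * z.imI + x2θ θ u * x2θ θ z + x3θ θ u * x3θ θ z

/-- Left θ-Cauchy–Riemann operator
`{}^θ𝒟 f = ∂f/∂x₀ + i ∂f/∂x₁ + (i e^{iθ} j) ∂f/∂x₂ + (e^{iθ} j) ∂f/∂x₃`. -/
def Dl (θ : ℝ) (f : H4 → H4) (z : H4) : H4 :=
  fderiv ℝ f z 1 + qI * fderiv ℝ f z qI + e2 θ * fderiv ℝ f z (e2 θ) +
    e3 θ * fderiv ℝ f z (e3 θ)

/-- Left (θ,u)-Cauchy–Riemann operator `{}^θ_u𝒟 f = {}^θ𝒟 f + u f`. -/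
def Dlu (θ : ℝ) (u : H4) (f : H4 → H4) (z : H4) : H4 := Dl θ f z + u * f z

/-- Right θ-Cauchy–Riemann operator. -/
def Dr (θ : ℝ) (f : H4 → H4) (z : H4) : H4 :=
  fderiv ℝ f z 1 + fderiv ℝ f z qI * qI + fderiv ℝ f z (e2 θ) * e2 θ +
    fderiv ℝ f z (e3 θ) * e3 θ

/-- Right (θ,u)-Cauchy–Riemann operator `{}^θ𝒟_{r,u} f = {}^θ𝒟_r f + f u`. -/
def Dru (θ : ℝ) (u : H4) (f : H4 → H4) (z : H4) : H4 := Dr θ f z + f z * u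

/-- Embedding of ℂ into the quaternions, `ℂ ≅ ℝ + ℝi ⊂ ℍ`. -/
def toH (a : ℂ) : H4 := ⟨a.re, a.im, 0, 0⟩

/-- First complex θ-component of a quaternion: `z₁ = x₀ + x₁ i`. -/
def c1 (z : H4) : ℂ := ⟨z.re, z.imI⟩
/-- Second complex θ-component of a quaternion: `z₂ = x₂ + x₃ i`. -/
def c2 (θ : ℝ) (z : H4) : ℂ := ⟨x2θ θ z, x3θ θ z⟩

/-- Wirtinger operator `∂/∂z̄₁ = ∂/∂x₀ + i ∂/∂x₁` on ℂ-valued functions. -/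
def db1 (f : H4 → ℂ) (z : H4) : ℂ := fderiv ℝ f z 1 + Complex.I * fderiv ℝ f z qI
/-- Wirtinger operator `∂/∂z̄₂ = ∂/∂x₂ + i ∂/∂x₃` on ℂ-valued functions. -/
def db2 (θ : ℝ) (f : H4 → ℂ) (z : H4) : ℂ :=
  fderiv ℝ f z (e2 θ) + Complex.I * fderiv ℝ f z (e3 θ)
/-- Wirtinger operator `∂/∂z₂ = ∂/∂x₂ − i ∂/∂x₃` on ℂ-valued functions. -/
def dz2 (θ : ℝ) (f : H4 → ℂ) (z : H4) : ℂ :=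
  fderiv ℝ f z (e2 θ) - Complex.I * fderiv ℝ f z (e3 θ)

/-- `e^{iθ}` as a complex number. -/
def cexpI (θ : ℝ) : ℂ := ⟨Real.cos θ, Real.sin θ⟩

/-- The (θ,u)-hyperholomorphic Bergman space `{}^θ_u𝒜(Ω)`: C¹ null solutions of `{}^θ_u𝒟`
with `∫_Ω |f|² dμ < ∞`. -/
def memA (θ : ℝ) (u : H4) (Ω : Set H4) (f : H4 → H4) : Prop :=
  ContDiffOn ℝ 1 f Ω ∧ (∀ z ∈ Ω, Dlu θ u f z = 0) ∧
    IntegrableOn (fun z => ‖f z‖ ^ 2) Ω volume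

/-!
The principal part of `{}^θ_u𝒟` is `∑ e * ∂_e f` over an orthonormal frame `e` of `ℍ`, which does
not depend on the frame, hence not on `θ`; and `exp ⟪u, ·⟫` conjugates `{}^θ_u𝒟` to it. Composed
with the conjugate operator it is the Laplacian, so its null solutions have the mean value property
for radial weights. Hence on small balls a null solution of `{}^θ_u𝒟` is its own average against a
smooth compactly supported kernel. By Hölder's inequality, evaluation at a point and the operator
itself then depend continuously on the `L²` norm, so the Bergman space is closed in `L²` and point
evaluations are bounded on it. The Riesz representation of the real part of an evaluation gives
the reproducing kernel, since both sides are linear under right multiplication by quaternions.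
-/

open scoped Gradient RealInnerProductSpace Topology ENNReal Convolution Quaternion RightActions

/-! ### Integration by parts, cutoffs and convolutions -/

section Calculus

variable {E F : Type*} [NormedAddCommGroup E] [NormedSpace ℝ E] [NormedAddCommGroup F]
  [NormedSpace ℝ F]

lemma exists_eventually_closedBall_subset {X : Type*} [PseudoMetricSpace X] {Ω : Set X} {z : X}
    (hΩ : Ω ∈ 𝓝 z) : ∃ r > 0, ∀ᶠ w in 𝓝 z, Metric.closedBall w r ⊆ Ω := by
  obtain ⟨ε, hε, hball⟩ := Metric.nhds_basis_closedBall.mem_iff.1 hΩ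
  refine ⟨ε / 2, half_pos hε, ?_⟩
  filter_upwards [Metric.closedBall_mem_nhds z (half_pos hε)] with w hw
  have hr : ε / 2 + dist w z ≤ ε := by linarith [Metric.mem_closedBall.1 hw]
  exact (Metric.closedBall_subset_closedBall' hr).trans hball

lemma exists_contDiff_eventuallyEq_nhdsSet [FiniteDimensional ℝ E] {n : ℕ∞} {f : E → F}
    {Ω K : Set E} (hΩ : IsOpen Ω) (hf : ContDiffOn ℝ n f Ω) (hK : IsClosed K)
    (hKΩ : K ⊆ Ω) :
    ∃ g : E → F, ContDiff ℝ n g ∧ g =ᶠ[𝓝ˢ K] f := by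
  obtain ⟨t, ht, hKt, htΩ⟩ := normal_exists_closure_subset hK hΩ hKΩ
  obtain ⟨χ, hχ1, hχ0, -⟩ := exists_contMDiffMap_one_nhds_of_subset_interior
    (n := n) (modelWithCornersSelf ℝ E) hK (t := t) (by rwa [ht.interior_eq])
  refine ⟨fun w => χ w • f w, contDiff_iff_contDiffAt.2 fun w => ?_, ?_⟩
  · by_cases hw : w ∈ Ω
    · exact χ.contMDiff.contDiff.contDiffAt.smul (hf.contDiffAt (hΩ.mem_nhds hw))
    · have hzero : (fun w => χ w • f w) =ᶠ[𝓝 w] 0 := by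
        filter_upwards [isClosed_closure.isOpen_compl.mem_nhds fun h => hw (htΩ h)] with y hy
        simp [hχ0 y fun h => hy (subset_closure h)]
      exact contDiffAt_const.congr_of_eventuallyEq hzero
  · filter_upwards [hχ1] with w hw
    simp [hw]

variable [MeasurableSpace E] [BorelSpace E] {μ : Measure E}

lemma integrable_fderiv_smul_fderiv [IsFiniteMeasureOnCompacts μ] {ψ : E → ℝ} {G : E → F}
    (hψ : ContDiff ℝ 1 ψ) (hc : HasCompactSupport ψ) (hG : ContDiff ℝ 1 G) (a b : E) :
    Integrable (fun w => fderiv ℝ ψ w a • fderiv ℝ G w b) μ := by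
  have := hψ.continuous_fderiv one_ne_zero
  have := hG.continuous_fderiv one_ne_zero
  exact Continuous.integrable_of_hasCompactSupport (by fun_prop)
    (hc.fderiv_apply ℝ a).smul_right

variable [FiniteDimensional ℝ E]

lemma integral_fderiv_smul_fderiv_comm [μ.IsAddHaarMeasure] {ψ : E → ℝ} {G : E → F}
    (hψ : ContDiff ℝ 2 ψ) (hc : HasCompactSupport ψ) (hG : ContDiff ℝ 1 G) (a b : E) :
    ∫ w, fderiv ℝ ψ w a • fderiv ℝ G w b ∂μ = ∫ w, fderiv ℝ ψ w b • fderiv ℝ G w a ∂μ := by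
  have hψ' : ContDiff ℝ 1 (fderiv ℝ ψ) := hψ.fderiv_right (by norm_num)
  have : Continuous (fderiv ℝ (fderiv ℝ ψ)) := hψ'.continuous_fderiv one_ne_zero
  have hGcont : Continuous G := hG.continuous
  have by_parts (a b : E) : ∫ w, fderiv ℝ ψ w a • fderiv ℝ G w b ∂μ =
      -∫ w, fderiv ℝ (fderiv ℝ ψ) w b a • G w ∂μ := by
    have hderiv (w : E) :
        fderiv ℝ (fun x => fderiv ℝ ψ x a) w b = fderiv ℝ (fderiv ℝ ψ) w b a := by
      rw [fderiv_clm_apply (hψ'.differentiable one_ne_zero w) (differentiableAt_const a)]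
      simp
    have hca := hc.fderiv_apply ℝ a
    simp only [← hderiv]
    refine integral_smul_fderiv_eq_neg_fderiv_smul_of_integrable ?_
      (integrable_fderiv_smul_fderiv (hψ.of_le one_le_two) hc hG a b) ?_
      (fun x _ => by have := hψ'.differentiable one_ne_zero; fun_prop)
      (fun x _ => hG.differentiable one_ne_zero x)
    · refine Continuous.integrable_of_hasCompactSupport ?_ (hca.fderiv_apply ℝ b).smul_right
      simp only [hderiv]
      fun_prop
    · exact Continuous.integrable_of_hasCompactSupport (by fun_prop) hca.smul_right
  have hsymm (w : E) : fderiv ℝ (fderiv ℝ ψ) w b a = fderiv ℝ (fderiv ℝ ψ) w a b :=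
    hψ.contDiffAt.isSymmSndFDerivAt (by simp) b a
  rw [by_parts a b, by_parts b a]
  simp only [hsymm]

lemma integrable_segment_fderiv [IsLocallyFiniteMeasure μ] {φ : E → ℝ} {G : E → F}
    (hφ : Continuous φ) (hc : HasCompactSupport φ) (hG : ContDiff ℝ 1 G) (z : E) :
    Integrable (fun x : ℝ × E => φ x.2 • fderiv ℝ G (z + x.1 • x.2) x.2)
      ((volume.restrict (Set.uIoc 0 1)).prod μ) := by
  have hcont : Continuous fun x : ℝ × E => φ x.2 • fderiv ℝ G (z + x.1 • x.2) x.2 := by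
    have := hG.continuous_fderiv one_ne_zero
    fun_prop
  have hcompact : IntegrableOn (fun x : ℝ × E => φ x.2 • fderiv ℝ G (z + x.1 • x.2) x.2)
      (Set.uIcc 0 1 ×ˢ tsupport φ) (volume.prod μ) :=
    hcont.continuousOn.integrableOn_compact (isCompact_uIcc.prod hc)
  rw [← Measure.restrict_univ (μ := μ), Measure.prod_restrict]
  refine (hcompact.mono_set (Set.prod_mono_left Set.uIoc_subset_uIcc)).of_forall_sdiff_eq_zero
    (measurableSet_uIoc.prod .univ) fun x hx => ?_
  have hx2 : x.2 ∉ tsupport φ := fun h => hx.2 ⟨hx.1.1, h⟩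
  rw [image_eq_zero_of_notMem_tsupport hx2, zero_smul]

end Calculus

section Convolution

variable {E F : Type*} [NormedAddCommGroup E] [MeasurableSpace E] [BorelSpace E]
  [NormedAddCommGroup F] [NormedSpace ℝ F] {ν : Measure E} {k : E → ℝ} {f : E → F}

lemma contDiff_integral_smul [NormedSpace ℝ E] (hk : ContDiff ℝ 1 k)
    (hc : HasCompactSupport k) (hf : LocallyIntegrable f ν) :
    ContDiff ℝ 1 fun z => ∫ ζ, k (z - ζ) • f ζ ∂ν :=
  hc.contDiff_convolution_right (ContinuousLinearMap.lsmul ℝ ℝ).flip hf hk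

lemma fderiv_integral_smul_apply [NormedSpace ℝ E] (hk : ContDiff ℝ 1 k)
    (hc : HasCompactSupport k) (hf : LocallyIntegrable f ν) (z v : E) :
    fderiv ℝ (fun z => ∫ ζ, k (z - ζ) • f ζ ∂ν) z v = ∫ ζ, fderiv ℝ k (z - ζ) v • f ζ ∂ν := by
  -- The lemma without a parameter assumes that `ν` is translation invariant.
  have hparam := hasFDerivAt_convolution_right_with_param
    (ContinuousLinearMap.lsmul ℝ ℝ (E := F)).flip (g := fun _ : Unit => k) isOpen_univ hc
    (fun _ _ _ => image_eq_zero_of_notMem_tsupport) hf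
    (hk.comp contDiff_snd).contDiffOn ((), z) (Set.mem_univ _)
  have hderiv := hparam.comp z (hasFDerivAt_prodMk_right () z)
  have hsnd (x : E) : fderiv ℝ (↿fun _ : Unit => k) ((), x) =
      fderiv ℝ k x ∘L ContinuousLinearMap.snd ℝ Unit E :=
    (HasFDerivAt.comp (g := k) (f := Prod.snd) ((), x)
      (hk.differentiable one_ne_zero x).hasFDerivAt hasFDerivAt_snd).fderiv
  have happly := convolution_precompR_apply (ContinuousLinearMap.lsmul ℝ ℝ (E := F)).flip hf
    (g := fun x => fderiv ℝ k x ∘L ContinuousLinearMap.snd ℝ Unit E)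
    ((hc.fderiv ℝ).comp_left (g := fun L => L ∘L ContinuousLinearMap.snd ℝ Unit E) (by simp))
    ((hk.continuous_fderiv one_ne_zero).clm_comp continuous_const) z (0, v)
  simp only [hsnd] at hderiv
  exact (congrArg (· v) hderiv.fderiv).trans happly

lemma exists_clm_eq_integral_smul [CompleteSpace F] [IsFiniteMeasureOnCompacts ν] {p : ℝ≥0∞}
    [Fact (1 ≤ p)] (hk : Continuous k) (hc : HasCompactSupport k) (z : E) :
    ∃ T : Lp F p ν →L[ℝ] F, ∀ f, T f = ∫ ζ, k (z - ζ) • f ζ ∂ν := by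
  have := ENNReal.HolderConjugate.inv_one_sub_inv' (a := p) Fact.out
  have : Fact (1 ≤ (1 - p⁻¹)⁻¹) := by simp [fact_iff]
  have hLp : MemLp (fun ζ => k (z - ζ)) (1 - p⁻¹)⁻¹ ν :=
    Continuous.memLp_of_hasCompactSupport (by fun_prop)
      (hc.comp_homeomorph (Homeomorph.subLeft z))
  refine ⟨(ContinuousLinearMap.lsmul ℝ ℝ).lpPairing ν _ p (hLp.toLp _), fun f => ?_⟩
  rw [ContinuousLinearMap.lpPairing_eq_integral]
  refine integral_congr_ae ?_
  filter_upwards [hLp.coeFn_toLp] with ζ hζ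
  rw [hζ, ContinuousLinearMap.lsmul_apply]

end Convolution

/-! ### Radial functions -/

section Radial

variable {E : Type*} [NormedAddCommGroup E] {q p : ℝ → ℝ}

/-- The radial function on `E` with profile `q`. Writing it through `r ^ 2 - ‖w‖ ^ 2` makes it as
smooth as `q`, and supported in the ball of radius `r` if `q` vanishes on `(-∞, 0]`. -/
def radial (q : ℝ → ℝ) (r : ℝ) (w : E) : ℝ := q (r ^ 2 - ‖w‖ ^ 2)

lemma contDiff_radial [InnerProductSpace ℝ E] {n : WithTop ℕ∞} (hq : ContDiff ℝ n q) (r : ℝ) :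
    ContDiff ℝ n (radial q r : E → ℝ) :=
  hq.comp (contDiff_const.sub (contDiff_norm_sq ℝ))

lemma tsupport_radial_subset (hq : ∀ x ≤ 0, q x = 0) {r : ℝ} (hr : 0 ≤ r) :
    tsupport (radial q r : E → ℝ) ⊆ Metric.closedBall 0 r := by
  refine closure_minimal (fun w hw => ?_) Metric.isClosed_closedBall
  rw [mem_closedBall_zero_iff]
  by_contra! hlt
  exact hw (hq _ (by nlinarith))

lemma hasCompactSupport_radial [NormedSpace ℝ E] [FiniteDimensional ℝ E]
    (hq : ∀ x ≤ 0, q x = 0) {r : ℝ} (hr : 0 ≤ r) : HasCompactSupport (radial q r : E → ℝ) :=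
  (isCompact_closedBall 0 r).of_isClosed_subset (isClosed_tsupport _)
    (tsupport_radial_subset hq hr)

lemma gradient_radial [InnerProductSpace ℝ E] [CompleteSpace E] (hp : ∀ x, HasDerivAt p (q x) x)
    (r : ℝ) (w : E) :
    ∇ (radial p r) w = (-2 * radial q r w) • w := by
  refine HasGradientAt.gradient (hasGradientAt_iff_hasFDerivAt.2 ?_)
  have hcomp := (hp (r ^ 2 - ‖w‖ ^ 2)).comp_hasFDerivAt w
    ((hasStrictFDerivAt_norm_sq w).hasFDerivAt.const_sub (r ^ 2))
  refine hcomp.congr_fderiv (ContinuousLinearMap.ext fun v => ?_)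
  simp [radial]
  ring

lemma exists_antideriv (hq : ContDiff ℝ 1 q) (hq0 : ∀ x ≤ 0, q x = 0) :
    ∃ p : ℝ → ℝ, ContDiff ℝ 2 p ∧ (∀ x ≤ 0, p x = 0) ∧ ∀ x, HasDerivAt p (q x) x := by
  have hp (x : ℝ) : HasDerivAt (fun y => ∫ s in (0 : ℝ)..y, q s) (q x) x :=
    (hq.continuous.integral_hasStrictDerivAt 0 x).hasDerivAt
  refine ⟨_, ?_, fun x hx => ?_, hp⟩
  · rw [show (2 : WithTop ℕ∞) = 1 + 1 by norm_num, contDiff_succ_iff_deriv]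
    refine ⟨fun x => (hp x).differentiableAt, by simp, ?_⟩
    rwa [funext fun x => (hp x).deriv]
  · rw [intervalIntegral.integral_symm, intervalIntegral.integral_congr (g := fun _ => 0)]
    · simp
    · exact fun s hs => hq0 s (by rw [Set.uIcc_of_le hx] at hs; exact hs.2)

end Radial

/-! ### First-order operators factoring the Laplacian -/

/-- The symbol of a first-order constant-coefficient operator `D` taking `F`-valued functions on
`E` to `F'`-valued ones, together with the symbol of an operator `D'` such that `D' D` is the
Laplacian. -/
structure DiracSymbol (E F F' : Type*) [NormedAddCommGroup E] [InnerProductSpace ℝ E]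
    [NormedAddCommGroup F] [NormedSpace ℝ F] [NormedAddCommGroup F'] [NormedSpace ℝ F'] where
  symbol : E →ₗ[ℝ] F →L[ℝ] F'
  conj : E →ₗ[ℝ] F' →L[ℝ] F
  conj_symbol_self : ∀ v x, conj v (symbol v x) = ‖v‖ ^ 2 • x

section Dirac

variable {E F F' : Type*} [NormedAddCommGroup E] [InnerProductSpace ℝ E]
  [NormedAddCommGroup F] [NormedSpace ℝ F] [NormedAddCommGroup F'] [NormedSpace ℝ F']

namespace DiracSymbol

lemma conj_symbol_add_swap (S : DiracSymbol E F F') (v w : E) (x : F) :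
    S.conj v (S.symbol w x) + S.conj w (S.symbol v x) = (2 * ⟪v, w⟫) • x := by
  have h := S.conj_symbol_self (v + w) x
  simp only [map_add, add_apply, S.conj_symbol_self] at h
  rw [norm_add_sq_real, add_smul, add_smul] at h
  linear_combination (norm := module) h

lemma sum_diag_eq_zero (S : DiracSymbol E F F') {ι : Type*} [Fintype ι]
    (b : OrthonormalBasis ι ℝ E) {A : ι → ι → F} (hA : ∀ i j, A i j = A j i)
    (hS : ∀ i, ∑ j, S.symbol (b j) (A i j) = 0) : ∑ i, A i i = 0 := by
  classical
  have hzero : ∑ i, ∑ j, S.conj (b i) (S.symbol (b j) (A i j)) = 0 := by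
    simp only [← map_sum, hS, map_zero, Finset.sum_const_zero]
  have hdouble : (2 : ℝ) • ∑ i, A i i = 0 := calc
    (2 : ℝ) • ∑ i, A i i = ∑ i, ∑ j, (2 * ⟪b i, b j⟫) • A i j := by
      simp [b.inner_eq_ite, Finset.smul_sum]
    _ = ∑ i, ∑ j, (S.conj (b i) (S.symbol (b j) (A i j))
          + S.conj (b j) (S.symbol (b i) (A j i))) := by
      simp only [← S.conj_symbol_add_swap, hA]
    _ = 0 := by
      simp only [Finset.sum_add_distrib]
      rw [Finset.sum_comm (f := fun i j => S.conj (b j) (S.symbol (b i) (A j i))), hzero, add_zero]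
  simpa using hdouble

variable [FiniteDimensional ℝ E]

/-- The principal part `∑ i, σ(eᵢ) (L eᵢ)` of the operator with symbol `σ`, as a function of the
derivative `L`, for an orthonormal basis `e`. -/
def contract (S : DiracSymbol E F F') : (E →L[ℝ] F) →ₗ[ℝ] F' :=
  ∑ i, (S.symbol (stdOrthonormalBasis ℝ E i)).toLinearMap ∘ₗ
    (ContinuousLinearMap.apply ℝ F (stdOrthonormalBasis ℝ E i)).toLinearMap

lemma contract_eq_sum (S : DiracSymbol E F F') {ι : Type*} [Fintype ι]
    (b : OrthonormalBasis ι ℝ E) (L : E →L[ℝ] F) :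
    S.contract L = ∑ i, S.symbol (b i) (L (b i)) := by
  have h := congrArg
    (TensorProduct.lift ((ContinuousLinearMap.coeLM ℝ ∘ₗ S.symbol).compl₂ L.toLinearMap))
    (InnerProductSpace.canonicalCovariantTensor_eq_sum E b)
  simpa [contract, InnerProductSpace.canonicalCovariantTensor] using h

lemma contract_smulRight_innerSL (S : DiracSymbol E F F') (u : E) (x : F) :
    S.contract ((innerSL ℝ u).smulRight x) = S.symbol u x := by
  let b := stdOrthonormalBasis ℝ E
  calc S.contract ((innerSL ℝ u).smulRight x)
      = S.symbol (∑ i, ⟪b i, u⟫ • b i) x := by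
        simp [S.contract_eq_sum b, real_inner_comm]
    _ = S.symbol u x := by rw [b.sum_repr']

/-- The operator `D + σ(u)`, where `D` has symbol `σ`. -/
def diracOp (S : DiracSymbol E F F') (u : E) (f : E → F) (z : E) : F' :=
  S.contract (fderiv ℝ f z) + S.symbol u (f z)

lemma diracOp_congr (S : DiracSymbol E F F') {u : E} {f g : E → F} {z : E} (h : f =ᶠ[𝓝 z] g) :
    S.diracOp u f z = S.diracOp u g z := by
  rw [diracOp, diracOp, h.fderiv_eq, h.self_of_nhds]

lemma diracOp_add (S : DiracSymbol E F F') {u : E} {f g : E → F} {z : E}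
    (hf : DifferentiableAt ℝ f z) (hg : DifferentiableAt ℝ g z) :
    S.diracOp u (f + g) z = S.diracOp u f z + S.diracOp u g z := by
  simp only [diracOp, fderiv_add hf hg, map_add, Pi.add_apply]
  abel

lemma diracOp_clm_comp (S : DiracSymbol E F F') {u : E} {f : E → F} {z : E} {L : F →L[ℝ] F}
    {L' : F' →L[ℝ] F'} (hL : ∀ v x, S.symbol v (L x) = L' (S.symbol v x))
    (hf : DifferentiableAt ℝ f z) :
    S.diracOp u (L ∘ f) z = L' (S.diracOp u f z) := by
  simp only [diracOp, fderiv_comp z L.differentiableAt hf, L.fderiv]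
  simp [S.contract_eq_sum (stdOrthonormalBasis ℝ E), hL]

lemma contract_fderiv_exp_smul (S : DiracSymbol E F F') (u : E) {f : E → F} {z : E}
    (hf : DifferentiableAt ℝ f z) :
    S.contract (fderiv ℝ (fun w => Real.exp ⟪u, w⟫ • f w) z) =
      Real.exp ⟪u, z⟫ • S.diracOp u f z := by
  have hexp : HasFDerivAt (fun w : E => Real.exp ⟪u, w⟫) (Real.exp ⟪u, z⟫ • innerSL ℝ u) z :=
    (innerSL ℝ u).hasFDerivAt.exp
  have hderiv : fderiv ℝ (fun w => Real.exp ⟪u, w⟫ • f w) z =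
      Real.exp ⟪u, z⟫ • (fderiv ℝ f z + (innerSL ℝ u).smulRight (f z)) := by
    rw [(hexp.fun_smul hf.hasFDerivAt).fderiv]
    ext v
    simp [smul_smul]
  rw [hderiv, map_smul, map_add, S.contract_smulRight_innerSL, diracOp]

end DiracSymbol

section MeanValue

variable [FiniteDimensional ℝ E] [MeasurableSpace E] [BorelSpace E] [CompleteSpace F]
  [CompleteSpace F'] {μ : Measure E} [μ.IsAddHaarMeasure]

namespace DiracSymbol

variable (S : DiracSymbol E F F') {q : ℝ → ℝ} {G : E → F} {z : E} {r : ℝ}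

lemma integral_fderiv_gradient_eq_zero {ψ : E → ℝ} (hψ : ContDiff ℝ 2 ψ)
    (hc : HasCompactSupport ψ) (hG : ContDiff ℝ 1 G)
    (hD : ∀ w ∈ tsupport ψ, S.contract (fderiv ℝ G w) = 0) :
    ∫ w, fderiv ℝ G w (∇ ψ w) ∂μ = 0 := by
  let b := stdOrthonormalBasis ℝ E
  have hint (v w : E) : Integrable (fun x => fderiv ℝ ψ x v • fderiv ℝ G x w) μ :=
    integrable_fderiv_smul_fderiv (hψ.of_le one_le_two) hc hG v w
  have hsum (w : E) :
      fderiv ℝ G w (∇ ψ w) = ∑ i, fderiv ℝ ψ w (b i) • fderiv ℝ G w (b i) := by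
    nth_rw 1 [← b.sum_repr' (∇ ψ w)]
    simp only [map_sum, map_smul, inner_gradient_right, conj_trivial]
  simp only [hsum]
  rw [integral_finsetSum _ fun i _ => hint (b i) (b i)]
  refine S.sum_diag_eq_zero b
    (A := fun i j => ∫ w, fderiv ℝ ψ w (b i) • fderiv ℝ G w (b j) ∂μ)
    (fun i j => integral_fderiv_smul_fderiv_comm hψ hc hG _ _) fun i => ?_
  calc ∑ j, S.symbol (b j) (∫ w, fderiv ℝ ψ w (b i) • fderiv ℝ G w (b j) ∂μ)
      = ∫ w, ∑ j, S.symbol (b j) (fderiv ℝ ψ w (b i) • fderiv ℝ G w (b j)) ∂μ := by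
        rw [integral_finsetSum _ fun j _ => (S.symbol (b j)).integrable_comp (hint _ _)]
        exact Finset.sum_congr rfl fun j _ =>
          ((S.symbol (b j)).integral_comp_comm (hint _ _)).symm
    _ = ∫ w, fderiv ℝ ψ w (b i) • S.contract (fderiv ℝ G w) ∂μ := by
        simp only [S.contract_eq_sum b, Finset.smul_sum, map_smul]
    _ = 0 := by
        refine integral_eq_zero_of_ae (.of_forall fun w => ?_)
        by_cases hw : w ∈ tsupport ψ
        · simp [hD w hw]
        · simp [fderiv_of_notMem_tsupport ℝ hw]

lemma integral_radial_smul_fderiv_eq_zero (hq : ContDiff ℝ 1 q) (hq0 : ∀ x ≤ 0, q x = 0)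
    (hG : ContDiff ℝ 1 G) (hr : 0 ≤ r)
    (hD : ∀ w ∈ Metric.closedBall z r, S.contract (fderiv ℝ G w) = 0) {t : ℝ}
    (ht : t ∈ Set.Ioc 0 1) :
    ∫ w, radial q r w • fderiv ℝ G (z + t • w) w ∂μ = 0 := by
  obtain ⟨p, hp, hp0, hpq⟩ := exists_antideriv hq hq0
  have hderiv (w : E) : fderiv ℝ (fun w => G (z + t • w)) w = t • fderiv ℝ G (z + t • w) := by
    rw [fderiv_comp_smul (f := fun w => G (z + w)), fderiv_comp_add_left]
  have hzero := S.integral_fderiv_gradient_eq_zero (μ := μ) (contDiff_radial hp r)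
    (hasCompactSupport_radial hp0 hr) (G := fun w => G (z + t • w)) (by fun_prop) fun w hw => by
      rw [hderiv, map_smul, hD, smul_zero]
      have hwr := mem_closedBall_zero_iff.1 (tsupport_radial_subset hp0 hr hw)
      rw [mem_closedBall_iff_norm, add_sub_cancel_left, norm_smul, Real.norm_of_nonneg ht.1.le]
      exact (mul_le_of_le_one_left (norm_nonneg w) ht.2).trans hwr
  have hscale : (-2 * t) • ∫ w, radial q r w • fderiv ℝ G (z + t • w) w ∂μ = 0 := by
    rw [← integral_smul, ← hzero]
    refine integral_congr_ae (.of_forall fun w => ?_)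
    simp only [hderiv, gradient_radial hpq, map_smul, smul_apply]
    module
  exact (smul_eq_zero.1 hscale).resolve_left (by linarith [ht.1])

lemma integral_radial_smul_eq (hq : ContDiff ℝ 1 q) (hq0 : ∀ x ≤ 0, q x = 0)
    (hG : ContDiff ℝ 1 G) (hr : 0 ≤ r)
    (hD : ∀ w ∈ Metric.closedBall z r, S.contract (fderiv ℝ G w) = 0) :
    ∫ w, radial q r w • G (z + w) ∂μ = (∫ w, radial q r w ∂μ) • G z := by
  have hrad := (contDiff_radial (E := E) hq r).continuous
  have hsupp := hasCompactSupport_radial (E := E) hq0 hr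
  have hsegment (w : E) : radial q r w • (G (z + w) - G z) =
      ∫ t in (0 : ℝ)..1, radial q r w • fderiv ℝ G (z + t • w) w := by
    have hpath (t : ℝ) : HasDerivAt (fun t : ℝ => G (z + t • w)) (fderiv ℝ G (z + t • w) w) t :=
      (hG.differentiable one_ne_zero _).hasFDerivAt.comp_hasDerivAt t
        (by simpa using ((hasDerivAt_id t).smul_const w).const_add z)
    have hcont : Continuous fun t : ℝ => fderiv ℝ G (z + t • w) w := by
      have := hG.continuous_fderiv one_ne_zero
      fun_prop
    rw [intervalIntegral.integral_smul, intervalIntegral.integral_eq_sub_of_hasDerivAt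
      (fun t _ => hpath t) (hcont.intervalIntegrable 0 1)]
    simp
  have hdiff : ∫ w, radial q r w • (G (z + w) - G z) ∂μ = 0 := by
    simp only [hsegment]
    rw [← intervalIntegral_integral_swap (integrable_segment_fderiv hrad hsupp hG z)]
    refine intervalIntegral.integral_zero_ae (.of_forall fun t ht => ?_)
    rw [Set.uIoc_of_le zero_le_one] at ht
    exact S.integral_radial_smul_fderiv_eq_zero hq hq0 hG hr hD ht
  have hint : Integrable (fun w => radial q r w • G (z + w)) μ :=
    Continuous.integrable_of_hasCompactSupport
      (hrad.smul (hG.continuous.comp (continuous_const_add z))) hsupp.smul_right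
  have hint0 : Integrable (fun w : E => radial q r w • G z) μ :=
    (hrad.integrable_of_hasCompactSupport hsupp).smul_const _
  simp only [smul_sub] at hdiff
  rw [integral_sub hint hint0, sub_eq_zero] at hdiff
  rw [hdiff, integral_smul_const]

end DiracSymbol

end MeanValue

/-! ### Local reproducing kernels -/

section AveragingKernel

lemma contDiff_exp_inner (u : E) {n : WithTop ℕ∞} :
    ContDiff ℝ n fun w : E => Real.exp ⟪u, w⟫ :=
  (contDiff_const.inner ℝ contDiff_id).exp

variable [MeasurableSpace E] {μ : Measure E}

/-- The convolution kernel, supported in the ball of radius `r`, that reproduces the null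
solutions of `DiracSymbol.diracOp S u`: a radial bump function of integral one, twisted by the
exponential that conjugates `D + σ(u)` to `D`. -/
def averagingKernel (μ : Measure E) (u : E) (r : ℝ) (w : E) : ℝ :=
  (∫ x, radial expNegInvGlue r x ∂μ)⁻¹ * (Real.exp (-⟪u, w⟫) * radial expNegInvGlue r w)

lemma contDiff_averagingKernel (u : E) (r : ℝ) {n : ℕ∞} :
    ContDiff ℝ n (averagingKernel μ u r) := by
  have hexp := contDiff_exp_inner (-u) (n := n)
  simp only [inner_neg_left] at hexp
  exact contDiff_const.mul (hexp.mul (contDiff_radial expNegInvGlue.contDiff r))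

lemma tsupport_averagingKernel_subset (u : E) {r : ℝ} (hr : 0 ≤ r) :
    tsupport (averagingKernel μ u r) ⊆ Metric.closedBall 0 r :=
  (tsupport_mul_subset_right.trans tsupport_mul_subset_right).trans
    (tsupport_radial_subset (fun _ => expNegInvGlue.zero_of_nonpos) hr)

variable [FiniteDimensional ℝ E]

lemma hasCompactSupport_averagingKernel (u : E) {r : ℝ} (hr : 0 ≤ r) :
    HasCompactSupport (averagingKernel μ u r) :=
  (isCompact_closedBall 0 r).of_isClosed_subset (isClosed_tsupport _)
    (tsupport_averagingKernel_subset u hr)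

variable [BorelSpace E]

lemma integral_radial_expNegInvGlue_pos [IsFiniteMeasureOnCompacts μ] [μ.IsOpenPosMeasure]
    {r : ℝ} (hr : 0 < r) :
    0 < ∫ w, radial expNegInvGlue r w ∂μ := by
  have hcont := (contDiff_radial (E := E) (expNegInvGlue.contDiff (n := 0)) r).continuous
  refine hcont.integral_pos_of_hasCompactSupport_nonneg_nonzero
    (hasCompactSupport_radial (fun _ => expNegInvGlue.zero_of_nonpos) hr.le)
    (fun _ => expNegInvGlue.nonneg _) (x := 0) (expNegInvGlue.pos_of_pos ?_).ne'
  simpa using pow_pos hr 2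

namespace DiracSymbol

variable [CompleteSpace F] [CompleteSpace F'] (S : DiracSymbol E F F') {f : E → F} {u z : E}
  {r : ℝ} [μ.IsAddHaarMeasure]

lemma integral_averagingKernel_smul (hr : 0 < r) (hf : ContDiff ℝ 1 f)
    (hD : ∀ w ∈ Metric.closedBall z r, S.diracOp u f w = 0) :
    ∫ ζ, averagingKernel μ u r (z - ζ) • f ζ ∂μ = f z := by
  have hmean := S.integral_radial_smul_eq (μ := μ) (expNegInvGlue.contDiff (n := 1))
    (fun _ => expNegInvGlue.zero_of_nonpos) (G := fun w => Real.exp ⟪u, w⟫ • f w)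
    ((contDiff_exp_inner u).smul hf) hr.le fun w hw => by
      rw [S.contract_fderiv_exp_smul u (hf.differentiable one_ne_zero w), hD w hw, smul_zero]
  have hc := (integral_radial_expNegInvGlue_pos (μ := μ) hr).ne'
  calc ∫ ζ, averagingKernel μ u r (z - ζ) • f ζ ∂μ
      = ∫ w, averagingKernel μ u r (-w) • f (z + w) ∂μ := by
        rw [← integral_add_left_eq_self _ z]
        simp only [sub_add_cancel_left]
    _ = ∫ w, ((∫ x, radial expNegInvGlue r x ∂μ)⁻¹ * Real.exp (-⟪u, z⟫)) •
          radial expNegInvGlue r w • Real.exp ⟪u, z + w⟫ • f (z + w) ∂μ := by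
        refine integral_congr_ae (.of_forall fun w => ?_)
        have hexp : Real.exp ⟪u, w⟫ = Real.exp (-⟪u, z⟫) * Real.exp ⟪u, z + w⟫ := by
          rw [← Real.exp_add, inner_add_right, neg_add_cancel_left]
        simp only [averagingKernel, radial, norm_neg, inner_neg_right, neg_neg, hexp]
        module
    _ = f z := by
        rw [integral_smul, hmean, smul_smul, smul_smul, Real.exp_neg]
        field_simp
        simp

lemma setIntegral_averagingKernel_smul {Ω : Set E} (hΩ : IsOpen Ω) (hf : ContDiffOn ℝ 1 f Ω)
    (hD : ∀ w ∈ Ω, S.diracOp u f w = 0) (hr : 0 < r) (hz : Metric.closedBall z r ⊆ Ω) :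
    ∫ ζ in Ω, averagingKernel μ u r (z - ζ) • f ζ ∂μ = f z := by
  obtain ⟨g, hg, hgf⟩ := exists_contDiff_eventuallyEq_nhdsSet (n := 1) hΩ hf
    Metric.isClosed_closedBall hz
  have hnear (w : E) (hw : w ∈ Metric.closedBall z r) : g =ᶠ[𝓝 w] f :=
    hgf.filter_mono (nhds_le_nhdsSet hw)
  have hvanish (ζ : E) (hζ : ζ ∉ Metric.closedBall z r) : averagingKernel μ u r (z - ζ) = 0 :=
    image_eq_zero_of_notMem_tsupport fun h => hζ <| by
      simpa [dist_eq_norm, norm_sub_rev] using tsupport_averagingKernel_subset u hr.le h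
  calc ∫ ζ in Ω, averagingKernel μ u r (z - ζ) • f ζ ∂μ
      = ∫ ζ, averagingKernel μ u r (z - ζ) • f ζ ∂μ :=
        setIntegral_eq_integral_of_forall_compl_eq_zero fun ζ hζ => by
          rw [hvanish ζ fun h => hζ (hz h), zero_smul]
    _ = ∫ ζ, averagingKernel μ u r (z - ζ) • g ζ ∂μ := by
        refine integral_congr_ae (.of_forall fun ζ => ?_)
        by_cases hζ : ζ ∈ Metric.closedBall z r
        · simp only [(hnear ζ hζ).self_of_nhds]
        · simp only [hvanish ζ hζ, zero_smul]
    _ = g z := S.integral_averagingKernel_smul hr hg fun w hw => by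
        rw [S.diracOp_congr (hnear w hw), hD w (hz hw)]
    _ = f z := (hnear z (Metric.mem_closedBall_self hr.le)).self_of_nhds

end DiracSymbol

end AveragingKernel

/-! ### Bergman spaces -/

namespace DiracSymbol

variable [MeasurableSpace E] {μ : Measure E} {p : ℝ≥0∞} {Ω : Set E} [FiniteDimensional ℝ E]

/-- The Bergman space of exponent `p` of `D + σ(u)` on `Ω`, as a predicate on functions: the
continuously differentiable null solutions on `Ω` that belong to `L ^ p`. -/
structure MemBergman (S : DiracSymbol E F F') (u : E) (p : ℝ≥0∞) (μ : Measure E) (Ω : Set E)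
    (f : E → F) : Prop where
  contDiffOn : ContDiffOn ℝ 1 f Ω
  diracOp_eq_zero : ∀ z ∈ Ω, S.diracOp u f z = 0
  memLp : MemLp f p (μ.restrict Ω)

section LinearStructure

variable {S : DiracSymbol E F F'} {u : E} {f g : E → F}

lemma MemBergman.add (hΩ : IsOpen Ω) (hf : S.MemBergman u p μ Ω f)
    (hg : S.MemBergman u p μ Ω g) : S.MemBergman u p μ Ω (f + g) where
  contDiffOn := hf.contDiffOn.add hg.contDiffOn
  diracOp_eq_zero z hz := by
    have hnhds := hΩ.mem_nhds hz
    rw [S.diracOp_add ((hf.contDiffOn.contDiffAt hnhds).differentiableAt one_ne_zero)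
      ((hg.contDiffOn.contDiffAt hnhds).differentiableAt one_ne_zero), hf.diracOp_eq_zero z hz,
      hg.diracOp_eq_zero z hz, add_zero]
  memLp := hf.memLp.add hg.memLp

lemma MemBergman.clm_comp (hΩ : IsOpen Ω) {L : F →L[ℝ] F} {L' : F' →L[ℝ] F'}
    (hL : ∀ v x, S.symbol v (L x) = L' (S.symbol v x)) (hf : S.MemBergman u p μ Ω f) :
    S.MemBergman u p μ Ω (L ∘ f) where
  contDiffOn := L.contDiff.comp_contDiffOn hf.contDiffOn
  diracOp_eq_zero z hz := by
    rw [S.diracOp_clm_comp hL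
      ((hf.contDiffOn.contDiffAt (hΩ.mem_nhds hz)).differentiableAt one_ne_zero),
      hf.diracOp_eq_zero z hz, map_zero]
  memLp := L.comp_memLp' hf.memLp

lemma memBergman_zero : S.MemBergman u p μ Ω (0 : E → F) where
  contDiffOn := contDiffOn_const
  diracOp_eq_zero z _ := by simp [diracOp]
  memLp := MemLp.zero'

/-- The Bergman space of exponent `p` of `D + σ(u)` on `Ω`, as the space of classes in `L ^ p`
with a representative satisfying `DiracSymbol.MemBergman`. -/
def bergmanSpace (S : DiracSymbol E F F') (u : E) (p : ℝ≥0∞) (μ : Measure E) (hΩ : IsOpen Ω) :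
    Submodule ℝ (Lp F p (μ.restrict Ω)) where
  carrier := {g | ∃ f, S.MemBergman u p μ Ω f ∧ g =ᵐ[μ.restrict Ω] f}
  add_mem' := by
    rintro _ _ ⟨f, hf, hgf⟩ ⟨f', hf', hgf'⟩
    exact ⟨f + f', hf.add hΩ hf', (Lp.coeFn_add _ _).trans (hgf.add hgf')⟩
  zero_mem' := ⟨0, memBergman_zero, Lp.coeFn_zero F p _⟩
  smul_mem' := by
    rintro c _ ⟨f, hf, hgf⟩
    exact ⟨c • f, hf.clm_comp hΩ (L := c • .id ℝ F) (L' := c • .id ℝ F') (by simp),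
      (Lp.coeFn_smul c _).trans (hgf.const_smul c)⟩

end LinearStructure

section Completeness

variable [BorelSpace E] [CompleteSpace F] {S : DiracSymbol E F F'} {u z : E} {f : E → F}

lemma MemBergman.setIntegral_averagingKernel [CompleteSpace F'] [μ.IsAddHaarMeasure]
    (hΩ : IsOpen Ω) {g : E → F} (hf : S.MemBergman u p μ Ω f) (hg : g =ᵐ[μ.restrict Ω] f) {r : ℝ}
    (hr : 0 < r) (hz : Metric.closedBall z r ⊆ Ω) :
    ∫ ζ in Ω, averagingKernel μ u r (z - ζ) • g ζ ∂μ = f z := by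
  rw [← S.setIntegral_averagingKernel_smul (μ := μ) hΩ hf.contDiffOn hf.diracOp_eq_zero hr hz]
  exact integral_congr_ae (hg.mono fun ζ hζ => by simp only [hζ])

variable [hp : Fact (1 ≤ p)]

lemma exists_clm_eq_diracOp_integral_smul (S : DiracSymbol E F F') (u : E) {ν : Measure E}
    [IsFiniteMeasureOnCompacts ν] {k : E → ℝ} (hk : ContDiff ℝ 1 k) (hc : HasCompactSupport k)
    (z : E) :
    ∃ T : Lp F p ν →L[ℝ] F', ∀ f, T f = S.diracOp u (fun w => ∫ ζ, k (w - ζ) • f ζ ∂ν) z := by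
  let b := stdOrthonormalBasis ℝ E
  have := hk.continuous_fderiv one_ne_zero
  obtain ⟨T, hT⟩ := exists_clm_eq_integral_smul (F := F) (ν := ν) (p := p) hk.continuous hc z
  choose T' hT' using fun i => exists_clm_eq_integral_smul (F := F) (ν := ν) (p := p)
    (k := fun w => fderiv ℝ k w (b i)) (by fun_prop) (hc.fderiv_apply ℝ (b i)) z
  refine ⟨∑ i, S.symbol (b i) ∘L T' i + S.symbol u ∘L T, fun f => ?_⟩
  have hf : LocallyIntegrable f ν := (Lp.memLp f).locallyIntegrable hp.out
  simp [diracOp, S.contract_eq_sum b, fderiv_integral_smul_apply hk hc hf, hT, hT']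

variable [CompleteSpace F'] [μ.IsAddHaarMeasure]

lemma exists_clm_eq_eval (S : DiracSymbol E F F') (u : E) (hΩ : IsOpen Ω) (hz : z ∈ Ω) :
    ∃ T : Lp F p (μ.restrict Ω) →L[ℝ] F, ∀ f (g : Lp F p (μ.restrict Ω)),
      S.MemBergman u p μ Ω f → g =ᵐ[μ.restrict Ω] f → T g = f z := by
  obtain ⟨r, hr, hball⟩ := Metric.nhds_basis_closedBall.mem_iff.1 (hΩ.mem_nhds hz)
  obtain ⟨T, hT⟩ := exists_clm_eq_integral_smul (F := F) (ν := μ.restrict Ω) (p := p)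
    (contDiff_averagingKernel (μ := μ) u r (n := 0)).continuous
    (hasCompactSupport_averagingKernel u hr.le) z
  exact ⟨T, fun f g hf hgf => (hT g).trans (hf.setIntegral_averagingKernel hΩ hgf hr hball)⟩

section Limit

variable {fn : ℕ → E → F} {g : ℕ → Lp F p (μ.restrict Ω)} {G : Lp F p (μ.restrict Ω)}

lemma contDiffAt_and_diracOp_eq_zero_of_tendsto (hΩ : IsOpen Ω)
    (hfn : ∀ n, S.MemBergman u p μ Ω (fn n)) (hg : ∀ n, g n =ᵐ[μ.restrict Ω] fn n)
    (hlim : Filter.Tendsto g Filter.atTop (𝓝 G))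
    (hf : ∀ w ∈ Ω, Filter.Tendsto (fun n => fn n w) Filter.atTop (𝓝 (f w))) (hz : z ∈ Ω) :
    ContDiffAt ℝ 1 f z ∧ S.diracOp u f z = 0 := by
  obtain ⟨r, hr, hball⟩ := exists_eventually_closedBall_subset (hΩ.mem_nhds hz)
  let k := averagingKernel μ u r
  have hk : ContDiff ℝ 1 k := contDiff_averagingKernel u r
  have hc : HasCompactSupport k := hasCompactSupport_averagingKernel u hr.le
  have hfn_near (n : ℕ) : fn n =ᶠ[𝓝 z] fun w => ∫ ζ in Ω, k (w - ζ) • g n ζ ∂μ :=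
    hball.mono fun w hw => ((hfn n).setIntegral_averagingKernel hΩ (hg n) hr hw).symm
  have hf_near : f =ᶠ[𝓝 z] fun w => ∫ ζ in Ω, k (w - ζ) • G ζ ∂μ := by
    filter_upwards [hball, hΩ.mem_nhds hz] with w hw hwΩ
    obtain ⟨T, hT⟩ := exists_clm_eq_integral_smul (F := F) (p := p) (ν := μ.restrict Ω)
      hk.continuous hc w
    refine tendsto_nhds_unique (hf w hwΩ) ?_
    simpa only [Function.comp_def, hT, (hfn _).setIntegral_averagingKernel hΩ (hg _) hr hw, k]
      using (T.continuous.tendsto G).comp hlim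
  obtain ⟨T, hT⟩ := S.exists_clm_eq_diracOp_integral_smul u (p := p) (ν := μ.restrict Ω) hk hc z
  have hTg (n : ℕ) : T (g n) = 0 := by
    rw [hT, ← S.diracOp_congr (hfn_near n), (hfn n).diracOp_eq_zero z hz]
  have hG : LocallyIntegrable G (μ.restrict Ω) := (Lp.memLp G).locallyIntegrable hp.out
  refine ⟨(contDiff_integral_smul hk hc hG).contDiffAt.congr_of_eventuallyEq hf_near, ?_⟩
  rw [S.diracOp_congr hf_near, ← hT]
  refine tendsto_nhds_unique ((T.continuous.tendsto G).comp hlim) ?_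
  simpa only [Function.comp_def, hTg] using tendsto_const_nhds

lemma exists_memBergman_of_tendsto (hΩ : IsOpen Ω) (hfn : ∀ n, S.MemBergman u p μ Ω (fn n))
    (hg : ∀ n, g n =ᵐ[μ.restrict Ω] fn n) (hlim : Filter.Tendsto g Filter.atTop (𝓝 G)) :
    ∃ f, S.MemBergman u p μ Ω f ∧ G =ᵐ[μ.restrict Ω] f := by
  have hpointwise : ∀ z ∈ Ω, ∃ y, Filter.Tendsto (fun n => fn n z) Filter.atTop (𝓝 y) := by
    intro z hz
    obtain ⟨T, hT⟩ := S.exists_clm_eq_eval u hΩ hz (p := p) (μ := μ)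
    refine ⟨T G, ?_⟩
    simpa only [Function.comp_def, hT _ _ (hfn _) (hg _)] using (T.continuous.tendsto G).comp hlim
  choose! f hf using hpointwise
  have hGf : G =ᵐ[μ.restrict Ω] f := by
    obtain ⟨φ, hφ, hφG⟩ := (tendstoInMeasure_of_tendsto_Lp hlim).exists_seq_tendsto_ae
    filter_upwards [hφG, ae_all_iff.2 hg, ae_restrict_mem hΩ.measurableSet] with ζ hζG hζg hζΩ
    refine tendsto_nhds_unique hζG (((hf ζ hζΩ).comp hφ.tendsto_atTop).congr fun n => ?_)
    exact (hζg (φ n)).symm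
  have hlocal := fun z hz => contDiffAt_and_diracOp_eq_zero_of_tendsto hΩ hfn hg hlim hf (z := z) hz
  exact ⟨f, ⟨fun z hz => (hlocal z hz).1.contDiffWithinAt, fun z hz => (hlocal z hz).2,
    (memLp_congr_ae hGf).1 (Lp.memLp G)⟩, hGf⟩

end Limit

lemma isClosed_bergmanSpace (S : DiracSymbol E F F') (u : E) (hΩ : IsOpen Ω) :
    IsClosed (S.bergmanSpace u p μ hΩ : Set (Lp F p (μ.restrict Ω))) := by
  refine isSeqClosed_iff_isClosed.1 fun g G hg hlim => ?_
  choose fn hfn hgfn using hg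
  exact exists_memBergman_of_tendsto hΩ hfn hgfn hlim

end Completeness

end DiracSymbol

end Dirac

/-! ### Quaternionic Riesz representation -/

section Riesz

variable {α : Type*} [MeasurableSpace α] {μ : Measure α}

lemma inner_eq_re_star_mul (a b : ℍ[ℝ]) : ⟪a, b⟫ = (star a * b).re := by
  simp [Quaternion.inner_def]

lemma integral_star_mul_inner {f g : α → ℍ[ℝ]} (hf : MemLp f 2 μ) (hg : MemLp g 2 μ)
    (q : ℍ[ℝ]) :
    ⟪∫ x, star (f x) * g x ∂μ, q⟫ = ∫ x, ⟪f x, g x * star q⟫ ∂μ := by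
  have hint : Integrable (fun x => star (f x) * g x) μ := hf.star.integrable_mul hg
  rw [real_inner_comm, ← integral_inner hint]
  refine integral_congr_ae (.of_forall fun x => ?_)
  simp only [inner_eq_re_star_mul]
  rw [← mul_assoc]
  simp
  ring

lemma exists_forall_eq_integral_star_mul {V : Submodule ℝ (Lp ℍ[ℝ] 2 μ)}
    (hV : IsClosed (V : Set (Lp ℍ[ℝ] 2 μ))) (hVmul : ∀ q : ℍ[ℝ], ∀ f ∈ V, f <• q ∈ V)
    (T : Lp ℍ[ℝ] 2 μ →L[ℝ] ℍ[ℝ]) (hT : ∀ q : ℍ[ℝ], ∀ f ∈ V, T (f <• q) = T f * q) :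
    ∃ B ∈ V, ∀ f ∈ V, T f = ∫ x, star (B x) * f x ∂μ := by
  have : CompleteSpace V := hV.completeSpace_coe
  let B : V := (InnerProductSpace.toDual ℝ V).symm (innerSL ℝ 1 ∘L T ∘L V.subtypeL)
  have hB (f : Lp ℍ[ℝ] 2 μ) (hf : f ∈ V) : ⟪1, T f⟫ = ∫ x, ⟪(B : Lp ℍ[ℝ] 2 μ) x, f x⟫ ∂μ := by
    rw [← L2.inner_def]
    exact (InnerProductSpace.toDual_symm_apply (x := ⟨f, hf⟩)
      (y := innerSL ℝ 1 ∘L T ∘L V.subtypeL)).symm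
  refine ⟨B, B.2, fun f hf => ext_inner_right ℝ fun q => ?_⟩
  calc ⟪T f, q⟫ = ⟪1, T (f <• star q)⟫ := by
        rw [hT _ f hf, Quaternion.inner_def, inner_eq_re_star_mul, star_one, one_mul]
    _ = ∫ x, ⟪(B : Lp ℍ[ℝ] 2 μ) x, f x * star q⟫ ∂μ := by
        rw [hB _ (hVmul _ f hf)]
        refine integral_congr_ae ?_
        filter_upwards [Lp.coeFn_smul (MulOpposite.op (star q)) f] with x hx
        rw [hx, Pi.smul_apply, op_smul_eq_mul]
    _ = ⟪∫ x, star ((B : Lp ℍ[ℝ] 2 μ) x) * f x ∂μ, q⟫ :=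
        (integral_star_mul_inner (Lp.memLp _) (Lp.memLp f) q).symm

end Riesz

/-! ### The `θ`-Cauchy–Riemann operator -/

section Quaternion

variable {u : H4} {θ : ℝ} {Ω : Set H4} {f : H4 → H4}

/-- The symbol `v ↦ (x ↦ v x)` of the operators `{}^θ𝒟`. -/
def fueterSymbol : DiracSymbol H4 H4 H4 where
  symbol := (ContinuousLinearMap.mul ℝ H4).toLinearMap
  conj := (ContinuousLinearMap.mul ℝ H4).toLinearMap ∘ₗ
    { starAddEquiv with map_smul' := Quaternion.star_smul }
  conj_symbol_self v x := by
    change star v * (v * x) = ‖v‖ ^ 2 • x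
    rw [← mul_assoc, Quaternion.star_mul_self, Quaternion.normSq_eq_norm_mul_self, ← pow_two,
      Quaternion.coe_mul_eq_smul]

lemma e2_eq (θ : ℝ) : e2 θ = ⟨0, 0, -Real.sin θ, Real.cos θ⟩ := by
  ext <;> simp only [e2, Quaternion.re_mul, Quaternion.imI_mul, Quaternion.imJ_mul,
    Quaternion.imK_mul] <;> simp [qI, eIθ, qJ]

lemma e3_eq (θ : ℝ) : e3 θ = ⟨0, 0, Real.cos θ, Real.sin θ⟩ := by
  ext <;> simp only [e3, Quaternion.re_mul, Quaternion.imI_mul, Quaternion.imJ_mul,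
    Quaternion.imK_mul] <;> simp [eIθ, qJ]

lemma orthonormal_thetaFrame (θ : ℝ) : Orthonormal ℝ ![1, qI, e2 θ, e3 θ] := by
  rw [orthonormal_iff_ite]
  intro i j
  have hinner (x y : H4) :
      ⟪x, y⟫ = x.re * y.re + x.imI * y.imI + x.imJ * y.imJ + x.imK * y.imK := by
    simp [Quaternion.inner_def]
  have hθ := Real.cos_sq_add_sin_sq θ
  rw [hinner, e2_eq, e3_eq]
  fin_cases i <;> fin_cases j <;> simp [qI] <;> linarith

/-- The orthonormal basis of `ℍ` underlying the `θ`-coordinates. -/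
def thetaBasis (θ : ℝ) : OrthonormalBasis (Fin 4) ℝ H4 :=
  (basisOfOrthonormalOfCardEqFinrank (orthonormal_thetaFrame θ)
    (by rw [Fintype.card_fin, Quaternion.finrank_eq_four])).toOrthonormalBasis (by
      rw [coe_basisOfOrthonormalOfCardEqFinrank]
      exact orthonormal_thetaFrame θ)

lemma coe_thetaBasis (θ : ℝ) : ⇑(thetaBasis θ) = ![1, qI, e2 θ, e3 θ] := by
  simp [thetaBasis]

lemma diracOp_fueterSymbol (θ : ℝ) (u : H4) (f : H4 → H4) (z : H4) :
    fueterSymbol.diracOp u f z = Dlu θ u f z := by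
  rw [DiracSymbol.diracOp, fueterSymbol.contract_eq_sum (thetaBasis θ), Fin.sum_univ_four]
  simp [fueterSymbol, coe_thetaBasis, Dlu, Dl]

lemma memBergman_fueterSymbol_iff (hΩ : IsOpen Ω) :
    fueterSymbol.MemBergman u 2 volume Ω f ↔ memA θ u Ω f := by
  have hsq (hf : ContDiffOn ℝ 1 f Ω) :
      MemLp f 2 (volume.restrict Ω) ↔ IntegrableOn (fun z => ‖f z‖ ^ 2) Ω volume :=
    memLp_two_iff_integrable_sq_norm
      (hf.continuousOn.aestronglyMeasurable hΩ.measurableSet)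
  refine ⟨fun h => ⟨h.contDiffOn, fun z hz => ?_, (hsq h.contDiffOn).1 h.memLp⟩,
    fun ⟨hC, hD, hI⟩ => ⟨hC, fun z hz => ?_, (hsq hC).2 hI⟩⟩
  · rw [← diracOp_fueterSymbol, h.diracOp_eq_zero z hz]
  · rw [diracOp_fueterSymbol θ, hD z hz]

lemma memBergman_fueterSymbol_op_smul (hΩ : IsOpen Ω) (q : H4)
    (hf : fueterSymbol.MemBergman u 2 volume Ω f) :
    fueterSymbol.MemBergman u 2 volume Ω (f <• q) :=
  hf.clm_comp hΩ (L := (ContinuousLinearMap.mul ℝ H4).flip q)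
    (L' := (ContinuousLinearMap.mul ℝ H4).flip q) fun v x => (mul_assoc v x q).symm

end Quaternion

theorem statement8_general (Ω : Set H4) (hΩo : IsOpen Ω) (θ : ℝ) (u : H4) (z : H4) (hz : z ∈ Ω) :
    ∃ B : H4 → H4, memA θ u Ω B ∧
      ∀ f : H4 → H4, memA θ u Ω f → f z = ∫ ζ in Ω, star (B ζ) * f ζ := by
  obtain ⟨T, hT⟩ := fueterSymbol.exists_clm_eq_eval u hΩo hz (p := 2) (μ := volume)
  have hsmul (q : H4) {g : Lp H4 2 (volume.restrict Ω)} {f : H4 → H4}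
      (hgf : g =ᵐ[volume.restrict Ω] f) : ⇑(g <• q) =ᵐ[volume.restrict Ω] f <• q :=
    (Lp.coeFn_smul _ g).trans (hgf.const_smul _)
  obtain ⟨_, ⟨B, hB, hBae⟩, hrepr⟩ := exists_forall_eq_integral_star_mul
    (fueterSymbol.isClosed_bergmanSpace u hΩo)
    (fun q _ ⟨f, hf, hgf⟩ => ⟨_, memBergman_fueterSymbol_op_smul hΩo q hf, hsmul q hgf⟩) T
    fun q g ⟨f, hf, hgf⟩ => by
      rw [hT _ _ (memBergman_fueterSymbol_op_smul hΩo q hf) (hsmul q hgf), hT _ _ hf hgf,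
        Pi.smul_apply, op_smul_eq_mul]
  refine ⟨B, (memBergman_fueterSymbol_iff hΩo).1 hB, fun f hf => ?_⟩
  have hf' : fueterSymbol.MemBergman u 2 volume Ω f := (memBergman_fueterSymbol_iff hΩo).2 hf
  have hf'ae := hf'.memLp.coeFn_toLp
  rw [← hT f _ hf' hf'ae, hrepr _ ⟨f, hf', hf'ae⟩]
  refine integral_congr_ae ?_
  filter_upwards [hBae, hf'ae] with ζ hζB hζf
  rw [hζB, hζf]

/-- existence of a reproducing Bergman kernel for `{}^θ_u𝒜(Ω)`. -/
theorem statement8 (Ω : Set H4) (hΩo : IsOpen Ω) (hΩc : IsConnected Ω)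
    (hΩb : Bornology.IsBounded Ω) (θ : ℝ) (hθ : θ ∈ Set.Ico 0 (2 * Real.pi)) (u : H4)
    (z : H4) (hz : z ∈ Ω) :
    ∃ B : H4 → H4, memA θ u Ω B ∧
      ∀ f : H4 → H4, memA θ u Ω f → f z = ∫ ζ in Ω, star (B ζ) * f ζ :=
  statement8_general Ω hΩo θ u z hz

end
end

section
/- Let Ω ⊆ ℍ ≅ ℂ² be open, θ ∈ [0,2π), α, β ∈ ℂ, and set u := α + (ie^{iθ}j)β ∈ ℍ. For every C¹ function g : Ω → ℂ (viewed as ℍ-valued) one has the identity ${}^θ𝒟_{r,u}[g] = \big(∂g/∂z̄₁ + α g\big) + (ie^{iθ}j)\big(∂\bar g/∂z̄₂ + β \bar g\big)$; consequently ${}^θ𝒟_{r,u}[g] = 0$ on Ω if and only if ∂g/∂z̄₁ = −α g and ∂g/∂z₂ = −β̄ g on Ω. -/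
open MeasureTheory

noncomputable section

/-!
Moving every complex factor to the right of `i e^{iθ} j` by `a (i e^{iθ} j) = (i e^{iθ} j) ā`, and
writing `e^{iθ} j = (i e^{iθ} j) i`, splits `Dru` applied to a complex-valued `g` into a component
in `ℂ` and a component in `(i e^{iθ} j) ℂ`. It vanishes exactly when both components do, and the
second one is the conjugate of `∂g/∂z₂ + β̄ g`.
-/

open scoped ComplexConjugate

attribute [simps] toH qJ

theorem toH_zero : toH 0 = 0 := map_zero Quaternion.ofComplex

theorem toH_add (a b : ℂ) : toH (a + b) = toH a + toH b := map_add Quaternion.ofComplex a b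

theorem toH_mul (a b : ℂ) : toH (a * b) = toH a * toH b := map_mul Quaternion.ofComplex a b

theorem toH_I : toH Complex.I = qI := rfl

theorem toH_mul_qJ (a : ℂ) : toH a * qJ = qJ * toH (conj a) := by
  ext <;> simp

theorem e3_eq_toH_mul_qJ (θ : ℝ) : e3 θ = toH (cexpI θ) * qJ := rfl

theorem e2_eq_toH_mul_qJ (θ : ℝ) : e2 θ = toH (Complex.I * cexpI θ) * qJ := by
  rw [toH_mul]
  rfl

theorem toH_mul_e2 (θ : ℝ) (a : ℂ) : toH a * e2 θ = e2 θ * toH (conj a) := by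
  rw [e2_eq_toH_mul_qJ, ← mul_assoc, ← toH_mul, mul_comm a, toH_mul, mul_assoc, toH_mul_qJ,
    mul_assoc]

theorem e2_mul_qI (θ : ℝ) : e2 θ * qI = e3 θ := by
  calc e2 θ * qI
      = toH (-Complex.I) * e2 θ := by rw [toH_mul_e2, map_neg, Complex.conj_I, neg_neg, toH_I]
    _ = toH (-Complex.I * (Complex.I * cexpI θ)) * qJ := by
        rw [e2_eq_toH_mul_qJ, ← mul_assoc, ← toH_mul]
    _ = e3 θ := by
        rw [← mul_assoc, neg_mul, Complex.I_mul_I, neg_neg, one_mul, e3_eq_toH_mul_qJ]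

theorem toH_mul_e3 (θ : ℝ) (a : ℂ) : toH a * e3 θ = e2 θ * toH (Complex.I * conj a) := by
  rw [← e2_mul_qI, ← mul_assoc, toH_mul_e2, mul_assoc, ← toH_I, ← toH_mul, mul_comm]

theorem c1_toH_add_e2_mul_toH (θ : ℝ) (a b : ℂ) : c1 (toH a + e2 θ * toH b) = a := by
  apply Complex.ext <;> simp [c1, e2_eq_toH_mul_qJ]

theorem c2_toH_add_e2_mul_toH (θ : ℝ) (a b : ℂ) : c2 θ (toH a + e2 θ * toH b) = b := by
  have h_imJ : (toH a + e2 θ * toH b).imJ = b.im * Real.cos θ - b.re * Real.sin θ := by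
    simp [e2_eq_toH_mul_qJ, cexpI, mul_comm, neg_add_eq_sub]
  have h_imK : (toH a + e2 θ * toH b).imK = b.im * Real.sin θ + b.re * Real.cos θ := by
    simp [e2_eq_toH_mul_qJ, cexpI, mul_comm]
  rw [c2, x2θ, x3θ, h_imJ, h_imK]
  apply Complex.ext
  · linear_combination b.re * Real.sin_sq_add_cos_sq θ
  · linear_combination b.im * Real.sin_sq_add_cos_sq θ

theorem toH_add_e2_mul_toH_eq_zero_iff (θ : ℝ) (a b : ℂ) :
    toH a + e2 θ * toH b = 0 ↔ a = 0 ∧ b = 0 := by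
  constructor
  · intro h
    have h_eq : toH a + e2 θ * toH b = toH 0 + e2 θ * toH 0 := by
      rw [h, toH_zero, mul_zero, add_zero]
    exact ⟨by simpa only [c1_toH_add_e2_mul_toH] using congrArg c1 h_eq,
      by simpa only [c2_toH_add_e2_mul_toH] using congrArg (c2 θ) h_eq⟩
  · rintro ⟨rfl, rfl⟩
    rw [toH_zero, mul_zero, add_zero]

section fderiv

variable {E : Type*} [NormedAddCommGroup E] [NormedSpace ℝ E]

theorem fderiv_toH {g : E → ℂ} {z : E} (hg : DifferentiableAt ℝ g z) (v : E) :
    fderiv ℝ (fun w => toH (g w)) z v = toH (fderiv ℝ g z v) := by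
  let L : ℂ →L[ℝ] H4 := Quaternion.ofComplex.toLinearMap.toContinuousLinearMap
  exact DFunLike.congr_fun (L.hasFDerivAt.comp z hg.hasFDerivAt).fderiv v

theorem fderiv_conj (g : E → ℂ) (z v : E) :
    fderiv ℝ (fun w => conj (g w)) z v = conj (fderiv ℝ g z v) :=
  DFunLike.congr_fun (fderiv_star (f := g)) v

end fderiv

theorem db2_conj (θ : ℝ) (g : H4 → ℂ) (z : H4) :
    db2 θ (fun w => conj (g w)) z = conj (dz2 θ g z) := by
  simp only [db2, dz2, fderiv_conj, map_sub, map_mul, Complex.conj_I, neg_mul, sub_neg_eq_add]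

section Differentiable

variable (θ : ℝ) (α β : ℂ) {g : H4 → ℂ}

theorem Dru_toH {z : H4} (hg : DifferentiableAt ℝ g z) :
    Dru θ (toH α + e2 θ * toH β) (fun w => toH (g w)) z
      = toH (db1 g z + α * g z) +
        e2 θ * toH (db2 θ (fun w => conj (g w)) z + β * conj (g z)) := by
  have term_qI : toH (fderiv ℝ g z qI) * qI = toH (Complex.I * fderiv ℝ g z qI) := by
    rw [← toH_I, ← toH_mul, mul_comm]
  have term_u : toH (g z) * (toH α + e2 θ * toH β)
      = toH (α * g z) + e2 θ * toH (β * conj (g z)) := by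
    rw [mul_add, ← mul_assoc, toH_mul_e2, mul_assoc, ← toH_mul, ← toH_mul, mul_comm α, mul_comm β]
  calc Dru θ (toH α + e2 θ * toH β) (fun w => toH (g w)) z
      = toH (fderiv ℝ g z 1) + toH (Complex.I * fderiv ℝ g z qI)
          + e2 θ * toH (conj (fderiv ℝ g z (e2 θ)))
          + e2 θ * toH (Complex.I * conj (fderiv ℝ g z (e3 θ)))
          + (toH (α * g z) + e2 θ * toH (β * conj (g z))) := by
        simp only [Dru, Dr, fderiv_toH hg, term_qI, term_u, toH_mul_e2, toH_mul_e3]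
    _ = toH (db1 g z + α * g z) +
          e2 θ * toH (db2 θ (fun w => conj (g w)) z + β * conj (g z)) := by
        simp only [db1, db2, fderiv_conj, toH_add, mul_add]
        abel

theorem Dru_toH_eq_zero_iff {z : H4} (hg : DifferentiableAt ℝ g z) :
    Dru θ (toH α + e2 θ * toH β) (fun w => toH (g w)) z = 0 ↔
      db1 g z = -α * g z ∧ dz2 θ g z = -conj β * g z := by
  have conj_component : db2 θ (fun w => conj (g w)) z + β * conj (g z)
      = conj (dz2 θ g z + conj β * g z) := by
    simp only [db2_conj, map_add, map_mul, Complex.conj_conj]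
  rw [Dru_toH θ α β hg, toH_add_e2_mul_toH_eq_zero_iff, conj_component, map_eq_zero,
    add_eq_zero_iff_eq_neg, add_eq_zero_iff_eq_neg, neg_mul, neg_mul]

theorem statement15_general {Ω : Set H4} (hg : ∀ z ∈ Ω, DifferentiableAt ℝ g z) :
    (∀ z ∈ Ω,
      Dru θ (toH α + e2 θ * toH β) (fun w => toH (g w)) z
        = toH (db1 g z + α * g z) +
          e2 θ * toH (db2 θ (fun w => conj (g w)) z + β * conj (g z))) ∧
    ((∀ z ∈ Ω, Dru θ (toH α + e2 θ * toH β) (fun w => toH (g w)) z = 0) ↔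
      (∀ z ∈ Ω, db1 g z = -α * g z ∧ dz2 θ g z = -conj β * g z)) :=
  ⟨fun z hz => Dru_toH θ α β (hg z hz),
    forall₂_congr fun z hz => Dru_toH_eq_zero_iff θ α β (hg z hz)⟩

end Differentiable

/-- for ℂ-valued g, `{}^θ𝒟_{r,u}[g] = (∂g/∂z̄₁ + αg) + (ie^{iθ}j)(∂ḡ/∂z̄₂ + βḡ)`
with `u = α + (ie^{iθ}j)β`; consequently `{}^θ𝒟_{r,u}[g] = 0` iff `∂g/∂z̄₁ = −αg` and
`∂g/∂z₂ = −β̄g` on Ω. -/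
theorem statement15 (Ω : Set H4) (hΩ : IsOpen Ω) (θ : ℝ) (hθ : θ ∈ Set.Ico 0 (2 * Real.pi))
    (α β : ℂ) (g : H4 → ℂ) (hg : ContDiffOn ℝ 1 g Ω) :
    (∀ z ∈ Ω,
      Dru θ (toH α + e2 θ * toH β) (fun w => toH (g w)) z
        = toH (db1 g z + α * g z) +
          e2 θ * toH (db2 θ (fun w => (starRingEnd ℂ) (g w)) z + β * (starRingEnd ℂ) (g z))) ∧
    ((∀ z ∈ Ω, Dru θ (toH α + e2 θ * toH β) (fun w => toH (g w)) z = 0) ↔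
      (∀ z ∈ Ω, db1 g z = -α * g z ∧ dz2 θ g z = -(starRingEnd ℂ) β * g z)) :=
  statement15_general θ α β fun _ hz =>
    (hg.contDiffAt (hΩ.mem_nhds hz)).differentiableAt one_ne_zero

end
end
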